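/- arXiv:0905.1118 — 4 statements merged into one kernel-verified Lean document; each statement's English description precedes it below -/
import Mathlib

section
/- Let G be a group with finite symmetric generating set Γ, acting partially on sets S and T, and let μ be a weighted ε-Følner set for the partial action on S. Suppose h : S → T satisfies: for every s ∈ S and γ ∈ Γ with μ(s) + μ(s·γ) > 0, both s·γ and h(s)·γ are defined and h(s·γ) = h(s)·γ. Then ν : T → [0,∞) defined by ν(t) = ∑_{s ∈ S, h(s) = t} μ(s) is a weighted ε-Følner set for the partial action on T. -/
/-- A partial (right) action of a group `G` on a set `S`: a partial function
`S × G → S` (encoded with `Option`) such that `x·1 = x`, `x·g = y ↔ x = y·g⁻¹`,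
and `x·(gh) = (x·g)·h` whenever all the quantities involved are defined. -/
structure PartialAction (G : Type*) [Group G] (S : Type*) where
  act : S → G → Option S
  act_one : ∀ x, act x 1 = some x
  act_inv : ∀ (x y : S) (g : G), act x g = some y ↔ act y g⁻¹ = some x
  act_mul : ∀ (x y z w : S) (g h : G),
    act x g = some y → act y h = some z → act x (g * h) = some w → w = z

/-- Extension of a weight function to `Option`, with the convention that
undefined values get weight `0`. -/
def optApply {S : Type*} (μ : S → ℝ) : Option S → ℝ
  | none => 0
  | some s => μ s

/-- `μ` is a weighted `ε`-Følner set for the partial action `P` with respect to `Γ`: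
`μ` is nonnegative with finite support and
`∑ γ ∈ Γ, ∑ s, |μ(s·γ) − μ(s)| < ε · ∑ s, μ(s)`. -/
def IsWeightedFolner {G S : Type*} [Group G] (P : PartialAction G S)
    (Γ : Finset G) (ε : ℝ) (μ : S → ℝ) : Prop :=
  (Function.support μ).Finite ∧ (∀ s, 0 ≤ μ s) ∧
    ∑ γ ∈ Γ, ∑ᶠ s, |optApply μ (P.act s γ) - μ s| < ε * ∑ᶠ s, μ s

open Classical in
lemma push_eq_sum {S T : Type*} (h : S → T) (f : S → ℝ) (F : Finset S)
    (hF : Function.support f ⊆ F) (t : T) :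
    ∑ᶠ s ∈ {s : S | h s = t}, f s = ∑ s ∈ F with h s = t, f s := by
  apply finsum_mem_eq_sum_of_inter_support_eq
  ext s
  simp only [Set.mem_inter_iff, Set.mem_ofPred_eq, Finset.coe_filter]
  constructor
  · rintro ⟨h1, h2⟩
    exact ⟨⟨hF h2, h1⟩, h2⟩
  · rintro ⟨⟨_, h1⟩, h2⟩
    exact ⟨h1, h2⟩

open Classical in
lemma push_support {S T : Type*} (h : S → T) (f : S → ℝ) (F : Finset S)
    (hF : Function.support f ⊆ F) :
    Function.support (fun t => ∑ᶠ s ∈ {s : S | h s = t}, f s) ⊆ (F.image h : Finset T) := by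
  intro t ht
  rw [Function.mem_support, push_eq_sum h f F hF] at ht
  obtain ⟨s, hs, _⟩ := Finset.exists_ne_zero_of_sum_ne_zero ht
  rw [Finset.mem_filter] at hs
  exact Finset.mem_coe.2 (Finset.mem_image.2 ⟨s, hs.1, hs.2⟩)

lemma push_total {S T : Type*} (h : S → T) (f : S → ℝ) (hf : (Function.support f).Finite) :
    ∑ᶠ t, ∑ᶠ s ∈ {s : S | h s = t}, f s = ∑ᶠ s, f s := by
  classical
  have hF : Function.support f ⊆ hf.toFinset := by simp
  rw [finsum_eq_sum_of_support_subset _ (push_support h f _ hF),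
    finsum_eq_sum_of_support_subset _ hF]
  simp_rw [push_eq_sum h f _ hF]
  exact Finset.sum_fiberwise_of_maps_to (fun s hs => Finset.mem_image_of_mem h hs) f

lemma push_abs_le {S T : Type*} (h : S → T) (a b : S → ℝ) (ha : (Function.support a).Finite)
    (hb : (Function.support b).Finite) :
    ∑ᶠ t, |∑ᶠ s ∈ {s : S | h s = t}, a s - ∑ᶠ s ∈ {s : S | h s = t}, b s|
      ≤ ∑ᶠ s, |a s - b s| := by
  classical
  have hF : Function.support a ⊆ (ha.toFinset ∪ hb.toFinset : Finset S) := by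
    intro s hs
    simp only [Function.mem_support] at hs
    simp [hs]
  have hG : Function.support b ⊆ (ha.toFinset ∪ hb.toFinset : Finset S) := by
    intro s hs
    simp only [Function.mem_support] at hs
    simp [hs]
  generalize ha.toFinset ∪ hb.toFinset = F at hF hG
  have hab : Function.support (fun s => |a s - b s|) ⊆ F := by
    intro s hs
    by_contra hn
    have h1 : a s = 0 := by by_contra h1; exact hn (hF h1)
    have h2 : b s = 0 := by by_contra h1; exact hn (hG h1)
    simp [h1, h2] at hs
  have hsup : Function.support (fun t => |∑ᶠ s ∈ {s : S | h s = t}, a s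
      - ∑ᶠ s ∈ {s : S | h s = t}, b s|) ⊆ (F.image h : Finset T) := by
    intro t ht
    by_contra hn
    have h1 : ∑ᶠ s ∈ {s : S | h s = t}, a s = 0 := by
      by_contra h1; exact hn (push_support h a F hF h1)
    have h2 : ∑ᶠ s ∈ {s : S | h s = t}, b s = 0 := by
      by_contra h1; exact hn (push_support h b F hG h1)
    apply ht
    simp only [h1, h2, sub_zero, abs_zero]
  rw [finsum_eq_sum_of_support_subset _ hsup, finsum_eq_sum_of_support_subset _ hab]
  simp_rw [push_eq_sum h a F hF, push_eq_sum h b F hG]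
  rw [← Finset.sum_fiberwise_of_maps_to (t := F.image h)
    (fun s hs => Finset.mem_image_of_mem h hs) (fun s => |a s - b s|)]
  apply Finset.sum_le_sum
  intro t _
  rw [← Finset.sum_sub_distrib]
  exact Finset.abs_sum_le_sum_abs _ _

lemma optApply_ne_zero {S : Type*} {μ : S → ℝ} {o : Option S} (ho : optApply μ o ≠ 0) :
    ∃ s, o = some s ∧ μ s ≠ 0 := by
  cases o with
  | none => exact absurd rfl ho
  | some s => exact ⟨s, rfl, ho⟩

lemma shift_support_finite {G S : Type*} [Group G] (P : PartialAction G S) (μ : S → ℝ)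
    (hf : (Function.support μ).Finite) (γ : G) :
    (Function.support (fun s => optApply μ (P.act s γ))).Finite := by
  have hfin : (⋃ s' ∈ Function.support μ, {s | P.act s' γ⁻¹ = some s}).Finite := by
    refine hf.biUnion (fun s' _ => Set.Subsingleton.finite ?_)
    intro x hx y hy
    simp only [Set.mem_ofPred_eq] at hx hy
    rw [hx] at hy
    exact Option.some.inj hy
  refine hfin.subset ?_
  intro s hs
  obtain ⟨s', h1, h2⟩ := optApply_ne_zero hs
  exact Set.mem_biUnion (x := s') h2 ((P.act_inv _ _ _).1 h1)

/-- If `μ` is a weighted `ε`-Følner set for the partial action on `S` and `h : S → T`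
commutes with the action of the generators wherever `μ(s) + μ(s·γ) > 0`, then the
push-forward `ν(t) = ∑_{h(s) = t} μ(s)` is a weighted `ε`-Følner set for the action on `T`. -/
theorem pushforward_weighted_folner {G S T : Type*} [Group G]
    (Γ : Finset G)
    (hsymm : ∀ γ ∈ Γ, γ⁻¹ ∈ Γ)
    (hgen : Subgroup.closure (Γ : Set G) = ⊤)
    (P : PartialAction G S) (Q : PartialAction G T)
    (ε : ℝ) (μ : S → ℝ) (hμ : IsWeightedFolner P Γ ε μ)
    (h : S → T)
    (hh : ∀ s, ∀ γ ∈ Γ, 0 < μ s + optApply μ (P.act s γ) →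
      ∃ s' t', P.act s γ = some s' ∧ Q.act (h s) γ = some t' ∧ h s' = t') :
    IsWeightedFolner Q Γ ε (fun t => ∑ᶠ s ∈ {s : S | h s = t}, μ s) := by
  obtain ⟨hfin, hnn, hlt⟩ := hμ
  have hopt : ∀ o, 0 ≤ optApply μ o := by
    intro o
    cases o with
    | none => exact le_refl _
    | some s => exact hnn s
  refine ⟨?_, ?_, ?_⟩
  · classical
    exact (Finset.finite_toSet _).subset
      (push_support h μ hfin.toFinset (by simp))
  · intro t
    exact finsum_nonneg (fun s => finsum_nonneg (fun _ => hnn s))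
  rw [push_total h μ hfin]
  refine lt_of_le_of_lt (Finset.sum_le_sum fun γ hγ => ?_) hlt
  have key : ∀ t, optApply (fun t => ∑ᶠ s ∈ {s : S | h s = t}, μ s) (Q.act t γ)
      = ∑ᶠ s ∈ {s : S | h s = t}, optApply μ (P.act s γ) := by
    intro t
    have fwd : ∀ s, optApply μ (P.act s γ) ≠ 0 → ∃ s', P.act s γ = some s' ∧ μ s' ≠ 0 ∧
        Q.act (h s) γ = some (h s') := by
      intro s hs
      obtain ⟨s', h1, h2⟩ := optApply_ne_zero hs
      have hpos := lt_of_le_of_ne (hopt (P.act s γ)) hs.symm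
      obtain ⟨s'', t', h3, h4, h5⟩ := hh s γ hγ (by linarith [hnn s])
      rw [h1] at h3
      obtain rfl := Option.some.inj h3
      exact ⟨s', h1, h2, h5 ▸ h4⟩
    rcases hQ : Q.act t γ with _ | t'
    · symm
      apply finsum_mem_eq_zero_of_forall_eq_zero
      intro s hs
      by_contra hne
      obtain ⟨s', _, _, h3⟩ := fwd s hne
      rw [(id hs : h _ = _), hQ] at h3
      cases h3
    · change ∑ᶠ s ∈ {s : S | h s = t'}, μ s = _
      rw [← finsum_mem_inter_support μ,
        ← finsum_mem_inter_support (fun s => optApply μ (P.act s γ))]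
      symm
      refine finsum_mem_eq_of_bijOn (fun s => (P.act s γ).getD s) ⟨?_, ?_, ?_⟩ ?_
      · rintro s ⟨h1, h2⟩
        obtain ⟨s', h3, h4, h5⟩ := fwd s h2
        rw [(id h1 : h _ = _), hQ] at h5
        simp only [h3, Option.getD_some]
        exact ⟨(Option.some.inj h5).symm, h4⟩
      · rintro s ⟨_, h2⟩ r ⟨_, h2'⟩ heq
        obtain ⟨s', h3, _, _⟩ := fwd s h2
        obtain ⟨r', h3', _, _⟩ := fwd r h2'
        simp only [h3, h3', Option.getD_some] at heq
        subst heq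
        rw [P.act_inv] at h3 h3'
        rw [h3] at h3'
        exact Option.some.inj h3'
      · rintro s' ⟨h1, h2⟩
        have hpos := lt_of_le_of_ne (hnn s') (Ne.symm h2)
        obtain ⟨s, t₂, h3, h4, h5⟩ := hh s' γ⁻¹ (hsymm γ hγ) (by
          linarith [hopt (P.act s' γ⁻¹)])
        rw [← P.act_inv] at h3
        rw [(id h1 : h _ = _), (Q.act_inv _ _ _).1 hQ] at h4
        refine ⟨s, ⟨?_, ?_⟩, ?_⟩
        · exact h5.trans (Option.some.inj h4).symm
        · simp only [Function.mem_support, h3]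
          exact h2
        · simp [h3]
      · rintro s ⟨_, h2⟩
        obtain ⟨s', h3, _, _⟩ := fwd s h2
        simp only [h3, Option.getD_some]
        rfl
  simp_rw [key]
  exact push_abs_le h _ _ (shift_support_finite P μ hfin γ) hfin
end

section
/- Let G be a group with finite symmetric generating set Γ acting partially on a set S. If μ is a weighted ε-Følner set, 0 ≤ δ < 1, and ν is a function from a finite subset of S into [0,∞) with ν(s) ≤ μ(s) for all s and ν(S) ≥ (1−δ)·μ(S), then ν (restricted to its support) is a weighted (ε + 2|Γ|δ)/(1−δ)-Følner set. -/
theorem finsum_le_aux {S : Type*} {f g : S → ℝ} (hf : (Function.support f).Finite)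
    (hg : (Function.support g).Finite) (h : ∀ s, f s ≤ g s) : ∑ᶠ s, f s ≤ ∑ᶠ s, g s := by
  have h1 : 0 ≤ ∑ᶠ s, (g s - f s) := finsum_nonneg fun s => sub_nonneg.2 (h s)
  rw [finsum_sub_distrib hg hf] at h1
  linarith

theorem shift_aux {G S : Type*} [Group G] (P : PartialAction G S) (γ : G)
    (f : S → ℝ) (hf : (Function.support f).Finite) (h0 : ∀ s, 0 ≤ f s) :
    (Function.support fun s => optApply f (P.act s γ)).Finite ∧
      ∑ᶠ s, optApply f (P.act s γ) ≤ ∑ᶠ s, f s := by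
  classical
  let φ : S → S := fun s => (P.act s γ).getD s
  have key : ∀ s ∈ (Function.support fun s => optApply f (P.act s γ)),
      P.act s γ = some (φ s) := by
    intro s hs
    rcases h : P.act s γ with _ | y
    · simp [h, optApply] at hs
    · simp [φ, h]
  have hval : ∀ s ∈ (Function.support fun s => optApply f (P.act s γ)),
      optApply f (P.act s γ) = f (φ s) := by
    intro s hs
    rw [key s hs]; rfl
  have hinj : Set.InjOn φ (Function.support fun s => optApply f (P.act s γ)) := by
    intro a ha b hb hab
    have h1 := (P.act_inv _ _ _).1 (key a ha)
    have h2 := (P.act_inv _ _ _).1 (key b hb)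
    rw [hab, h2] at h1
    exact (Option.some.inj h1).symm
  have hfin : (Function.support fun s => optApply f (P.act s γ)).Finite := by
    refine Set.Finite.of_finite_image (hf.subset ?_) hinj
    rintro _ ⟨s, hs, rfl⟩
    have := hval s hs
    rw [Function.mem_support] at hs ⊢
    rwa [← this]
  refine ⟨hfin, ?_⟩
  rw [finsum_eq_sum _ hfin, finsum_eq_sum _ hf]
  calc _ = ∑ s ∈ hfin.toFinset, f (φ s) :=
        Finset.sum_congr rfl fun s hs => hval s (by simpa using hs)
    _ = ∑ y ∈ hfin.toFinset.image φ, f y := by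
        rw [Finset.sum_image]
        simpa using hinj
    _ ≤ _ := by
        refine Finset.sum_le_sum_of_subset_of_nonneg ?_ fun y _ _ => h0 y
        intro y hy
        obtain ⟨s, hs, rfl⟩ := Finset.mem_image.1 hy
        have hs' := (Set.Finite.mem_toFinset hfin).1 hs
        have := hval s hs'
        rw [Function.mem_support] at hs'
        simpa [← this] using hs'

/-- If `μ` is a weighted `ε`-Følner set, `0 ≤ δ < 1`, and `ν ≤ μ` pointwise is
nonnegative with finite support and `ν(S) ≥ (1−δ)·μ(S)`, then `ν` is a weighted
`(ε + 2|Γ|δ)/(1−δ)`-Følner set. -/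
theorem weighted_folner_refine {G S : Type*} [Group G]
    (Γ : Finset G)
    (hsymm : ∀ γ ∈ Γ, γ⁻¹ ∈ Γ)
    (hgen : Subgroup.closure (Γ : Set G) = ⊤)
    (P : PartialAction G S)
    (ε δ : ℝ) (hδ0 : 0 ≤ δ) (hδ1 : δ < 1)
    (μ ν : S → ℝ) (hμ : IsWeightedFolner P Γ ε μ)
    (hνfin : (Function.support ν).Finite) (hν0 : ∀ s, 0 ≤ ν s)
    (hle : ∀ s, ν s ≤ μ s)
    (htot : (1 - δ) * ∑ᶠ s, μ s ≤ ∑ᶠ s, ν s) :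
    IsWeightedFolner P Γ ((ε + 2 * (Γ.card : ℝ) * δ) / (1 - δ)) ν := by
  obtain ⟨hμfin, hμ0, hμF⟩ := hμ
  refine ⟨hνfin, hν0, ?_⟩
  set M := ∑ᶠ s, μ s with hM
  have hM0 : 0 ≤ M := finsum_nonneg hμ0
  have hlfin : (Function.support fun s => μ s - ν s).Finite :=
    (hμfin.union hνfin).subset (Function.support_sub μ ν)
  have hl0 : ∀ s, 0 ≤ μ s - ν s := fun s => sub_nonneg.2 (hle s)
  have hlsum : ∑ᶠ s, (μ s - ν s) ≤ δ * M := by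
    rw [finsum_sub_distrib hμfin hνfin]; linarith
  have hstep : ∀ γ ∈ Γ, ∑ᶠ s, |optApply ν (P.act s γ) - ν s| ≤
      ∑ᶠ s, |optApply μ (P.act s γ) - μ s| + 2 * δ * M := by
    intro γ _
    obtain ⟨hA, hA'⟩ := shift_aux P γ _ hlfin hl0
    have hB := (shift_aux P γ μ hμfin hμ0).1
    have hC := (shift_aux P γ ν hνfin hν0).1
    have hD : (Function.support fun s => |optApply μ (P.act s γ) - μ s|).Finite := by
      refine (hB.union hμfin).subset fun s hs => ?_
      by_contra h
      simp only [Set.mem_union, Function.mem_support, not_or, not_not] at h hs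
      exact hs (by rw [h.1, h.2]; simp)
    have hE : (Function.support fun s => |optApply ν (P.act s γ) - ν s|).Finite := by
      refine (hC.union hνfin).subset fun s hs => ?_
      by_contra h
      simp only [Set.mem_union, Function.mem_support, not_or, not_not] at h hs
      exact hs (by rw [h.1, h.2]; simp)
    have hF : (Function.support fun s =>
        optApply (fun s => μ s - ν s) (P.act s γ) + (μ s - ν s)).Finite :=
      (hA.union hlfin).subset (Function.support_add _ _)
    have h1 : ∑ᶠ s, |optApply ν (P.act s γ) - ν s| ≤
        ∑ᶠ s, (|optApply μ (P.act s γ) - μ s| +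
          (optApply (fun s => μ s - ν s) (P.act s γ) + (μ s - ν s))) := by
      refine finsum_le_aux hE ((hD.union hF).subset (Function.support_add _ _)) fun s => ?_
      have hs := hl0 s
      have e1 := le_abs_self (optApply μ (P.act s γ) - μ s)
      have e2 := neg_abs_le (optApply μ (P.act s γ) - μ s)
      rcases h : P.act s γ with _ | y
      · simp only [h, optApply] at e1 e2 ⊢
        rw [abs_le]; constructor <;> linarith
      · have hy := hl0 y
        simp only [h, optApply] at e1 e2 ⊢
        rw [abs_le]; constructor <;> linarith
    rw [finsum_add_distrib hD hF, finsum_add_distrib hA hlfin] at h1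
    linarith
  have hsum := Finset.sum_le_sum hstep
  rw [Finset.sum_add_distrib, Finset.sum_const, nsmul_eq_mul] at hsum
  have hnn : 0 ≤ ∑ γ ∈ Γ, ∑ᶠ s, |optApply μ (P.act s γ) - μ s| :=
    Finset.sum_nonneg fun γ _ => finsum_nonneg fun s => abs_nonneg _
  have hε : 0 < ε := pos_of_mul_pos_left (lt_of_le_of_lt hnn hμF) hM0
  have hd : 0 < 1 - δ := by linarith
  have hc : 0 ≤ (ε + 2 * (Γ.card : ℝ) * δ) / (1 - δ) := by positivity
  have hfinal := mul_le_mul_of_nonneg_left htot hc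
  have heq : (ε + 2 * (Γ.card : ℝ) * δ) / (1 - δ) * ((1 - δ) * M)
      = (ε + 2 * (Γ.card : ℝ) * δ) * M := by
    field_simp
  rw [heq] at hfinal
  linarith
end

section
/- Let G be a group with finite symmetric generating set Γ acting partially on a set S. If ε > 0 and μ is a weighted ε-Følner set, then the support of μ contains a Γ-connected component A such that the restriction μ↾A is a weighted ε-Følner set. -/
/-- A set `A ⊆ S` is `Γ`-connected if any two of its points are joined by a chain of
moves by generators in `Γ`, all of whose intermediate points are defined and lie in `A`. -/
def GammaConnected {G S : Type*} [Group G] (P : PartialAction G S)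
    (Γ : Finset G) (A : Set S) : Prop :=
  ∀ x ∈ A, ∀ y ∈ A, ∃ (l : ℕ) (c : ℕ → S), c 0 = x ∧ c l = y ∧
    (∀ i ≤ l, c i ∈ A) ∧ ∀ i < l, ∃ γ ∈ Γ, P.act (c i) γ = some (c (i + 1))

/-- `A` is a `Γ`-connected component of `B`: a maximal `Γ`-connected subset of `B`. -/
def IsGammaComponent {G S : Type*} [Group G] (P : PartialAction G S)
    (Γ : Finset G) (B A : Set S) : Prop :=
  A ⊆ B ∧ GammaConnected P Γ A ∧
    ∀ A' : Set S, A ⊆ A' → A' ⊆ B → GammaConnected P Γ A' → A' = A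

/-- One step inside `B`. -/
def gStep {G S : Type*} [Group G] (P : PartialAction G S) (Γ : Finset G) (B : Set S)
    (x y : S) : Prop := x ∈ B ∧ y ∈ B ∧ ∃ γ ∈ Γ, P.act x γ = some y

/-- The component of `x` in `B`. -/
def gComp {G S : Type*} [Group G] (P : PartialAction G S) (Γ : Finset G) (B : Set S)
    (x : S) : Set S := {y | Relation.ReflTransGen (gStep P Γ B) x y}

section
variable {G S : Type*} [Group G] {P : PartialAction G S} {Γ : Finset G} {B : Set S}

lemma gStep_symm (hsymm : ∀ γ ∈ Γ, γ⁻¹ ∈ Γ) {x y : S} (h : gStep P Γ B x y) :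
    gStep P Γ B y x := by
  obtain ⟨hx, hy, γ, hγ, e⟩ := h
  exact ⟨hy, hx, γ⁻¹, hsymm γ hγ, (P.act_inv _ _ _).1 e⟩

lemma gRefl_symm (hsymm : ∀ γ ∈ Γ, γ⁻¹ ∈ Γ) {x y : S}
    (h : Relation.ReflTransGen (gStep P Γ B) x y) :
    Relation.ReflTransGen (gStep P Γ B) y x := by
  induction h with
  | refl => exact .refl
  | tail _ h ih => exact .head (gStep_symm hsymm h) ih

lemma gComp_eq (hsymm : ∀ γ ∈ Γ, γ⁻¹ ∈ Γ) {x y : S} (h : y ∈ gComp P Γ B x) :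
    gComp P Γ B x = gComp P Γ B y := by
  ext z
  exact ⟨fun hz => (gRefl_symm hsymm h).trans hz, fun hz => Relation.ReflTransGen.trans h hz⟩

lemma gComp_sub {x : S} (hx : x ∈ B) : gComp P Γ B x ⊆ B := by
  intro y hy
  induction hy with
  | refl => exact hx
  | tail _ h _ => exact h.2.1

lemma gChain {A : Set S} (hA : ∀ x ∈ A, ∀ y, gStep P Γ B x y → y ∈ A) {x y : S}
    (h : Relation.ReflTransGen (gStep P Γ B) x y) (hx : x ∈ A) :
    ∃ (l : ℕ) (c : ℕ → S), c 0 = x ∧ c l = y ∧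
    (∀ i ≤ l, c i ∈ A) ∧ ∀ i < l, ∃ γ ∈ Γ, P.act (c i) γ = some (c (i + 1)) := by
  induction h using Relation.ReflTransGen.head_induction_on with
  | refl => exact ⟨0, fun _ => y, rfl, rfl, fun _ _ => hx, fun i hi => absurd hi (by omega)⟩
  | @head a b hab _ ih =>
    obtain ⟨l, c, h0, hl, hc, hs⟩ := ih (hA a hx b hab)
    refine ⟨l + 1, fun i => Nat.casesOn i a c, rfl, hl, ?_, ?_⟩
    · rintro (_ | i) hi
      · exact hx
      · exact hc i (by omega)
    · rintro (_ | i) hi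
      · obtain ⟨γ, hγ, e⟩ := hab.2.2
        exact ⟨γ, hγ, by simpa [h0] using e⟩
      · exact hs i (by omega)

lemma gComp_isComp (hsymm : ∀ γ ∈ Γ, γ⁻¹ ∈ Γ) {x : S} (hx : x ∈ B) :
    IsGammaComponent P Γ B (gComp P Γ B x) := by
  refine ⟨gComp_sub hx, ?_, ?_⟩
  · intro y hy z hz
    exact gChain (fun a ha b hab => Relation.ReflTransGen.tail ha hab)
      ((gRefl_symm hsymm hy).trans hz) hy
  · intro A' h1 h2 h3
    refine Set.Subset.antisymm ?_ h1
    intro y hy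
    obtain ⟨l, c, h0, hl, hc, hs⟩ := h3 x (h1 .refl) y hy
    have key : ∀ i ≤ l, c i ∈ gComp P Γ B x := by
      intro i
      induction i with
      | zero => intro _; rw [h0]; exact .refl
      | succ i ih =>
        intro hi
        exact Relation.ReflTransGen.tail (ih (by omega))
          ⟨h2 (hc i (by omega)), h2 (hc _ hi), hs i (by omega)⟩
    rw [← hl]
    exact key l le_rfl

lemma diff_finite (P : PartialAction G S) (γ : G) {ν : S → ℝ}
    (h : (Function.support ν).Finite) :
    (Function.support fun s => |optApply ν (P.act s γ) - ν s|).Finite := by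
  have h2 : {s | ∃ y ∈ Function.support ν, P.act y γ⁻¹ = some s}.Finite := by
    have := h.biUnion (t := fun y => {s | P.act y γ⁻¹ = some s}) (fun y _ =>
      Set.Subsingleton.finite (fun a ha b hb => Option.some_injective _ (ha.symm.trans hb)))
    refine this.subset ?_
    rintro s ⟨y, hy, e⟩
    exact Set.mem_biUnion hy e
  refine (h.union h2).subset ?_
  intro s hs
  by_contra hn
  simp only [Set.mem_union, not_or] at hn
  obtain ⟨ha, hb⟩ := hn
  have hs0 : ν s = 0 := by simpa using ha
  apply hs
  cases e : P.act s γ with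
  | none => simp [optApply, hs0, e]
  | some t =>
    have : ν t = 0 := by
      by_contra ht
      exact hb ⟨t, ht, (P.act_inv _ _ _).1 e⟩
    simp [optApply, hs0, this, e]

end

/-- If `ε > 0` and `μ` is a weighted `ε`-Følner set, then the support of `μ` contains a
`Γ`-connected component `A` such that `μ↾A` is a weighted `ε`-Følner set. -/
theorem weighted_folner_connected_component {G S : Type*} [Group G]
    (Γ : Finset G)
    (hsymm : ∀ γ ∈ Γ, γ⁻¹ ∈ Γ)
    (hgen : Subgroup.closure (Γ : Set G) = ⊤)
    (P : PartialAction G S)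
    (ε : ℝ) (hε : 0 < ε) (μ : S → ℝ) (hμ : IsWeightedFolner P Γ ε μ) :
    ∃ A : Set S, IsGammaComponent P Γ (Function.support μ) A ∧
      IsWeightedFolner P Γ ε (Set.indicator A μ) := by
  classical
  obtain ⟨hfin, hpos, hlt⟩ := hμ
  set B := Function.support μ with hB
  have hz : ∀ s, s ∉ B → μ s = 0 := fun s hs => by simpa [hB] using hs
  let F : Finset (Set S) := hfin.toFinset.image (gComp P Γ B)
  have hF : ∀ A ∈ F, ∃ x ∈ B, gComp P Γ B x = A := by
    intro A hA
    obtain ⟨x, hx, e⟩ := Finset.mem_image.1 hA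
    exact ⟨x, by simpa using hx, e⟩
  have hFm : ∀ x ∈ B, gComp P Γ B x ∈ F := fun x hx =>
    Finset.mem_image.2 ⟨x, by simpa using hx, rfl⟩
  have hFu : ∀ A ∈ F, ∀ x ∈ A, A = gComp P Γ B x := by
    intro A hA x hx
    obtain ⟨y, hy, rfl⟩ := hF A hA
    exact gComp_eq hsymm hx
  have hself : ∀ x, x ∈ gComp P Γ B x := fun x => Relation.ReflTransGen.refl
  have hfinA : ∀ A : Set S, (Function.support (A.indicator μ)).Finite := fun A =>
    hfin.subset (by rw [Set.support_indicator]; exact Set.inter_subset_right)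
  have hzA : ∀ (A : Set S) s, s ∉ B → A.indicator μ s = 0 := fun A s hs => by
    simp [Set.indicator_apply, hz s hs]
  have hM : ∀ s, μ s = ∑ A ∈ F, A.indicator μ s := by
    intro s
    by_cases hs : s ∈ B
    · rw [Finset.sum_eq_single_of_mem _ (hFm s hs), Set.indicator_of_mem (hself s)]
      intro A hA hne
      exact Set.indicator_of_notMem (fun h => hne (hFu A hA s h)) _
    · rw [hz s hs, Finset.sum_eq_zero fun A _ => hzA A s hs]
  have hD : ∀ γ ∈ Γ, ∀ s, |optApply μ (P.act s γ) - μ s| =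
      ∑ A ∈ F, |optApply (A.indicator μ) (P.act s γ) - A.indicator μ s| := by
    intro γ hγ s
    cases e : P.act s γ with
    | none =>
      simp only [optApply, zero_sub, abs_neg]
      rw [abs_of_nonneg (hpos s), hM s]
      refine Finset.sum_congr rfl fun A _ => (abs_of_nonneg ?_).symm
      exact Set.indicator_nonneg (fun x _ => hpos x) s
    | some t =>
      simp only [optApply]
      by_cases hs : s ∈ B
      · by_cases ht : t ∈ B
        · have hst : t ∈ gComp P Γ B s := Relation.ReflTransGen.single ⟨hs, ht, γ, hγ, e⟩
          rw [Finset.sum_eq_single_of_mem _ (hFm s hs), Set.indicator_of_mem (hself s),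
            Set.indicator_of_mem hst]
          intro A hA hne
          rw [Set.indicator_of_notMem (fun h => hne (hFu A hA s h)),
            Set.indicator_of_notMem]
          · simp
          · intro h
            exact hne ((hFu A hA t h).trans (gComp_eq hsymm hst).symm)
        · rw [hz t ht]
          simp only [hzA _ t ht, zero_sub, abs_neg]
          rw [abs_of_nonneg (hpos s), hM s]
          refine Finset.sum_congr rfl fun A _ => (abs_of_nonneg ?_).symm
          exact Set.indicator_nonneg (fun x _ => hpos x) s
      · rw [hz s hs]
        simp only [hzA _ s hs, sub_zero]
        rw [abs_of_nonneg (hpos t), hM t]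
        refine Finset.sum_congr rfl fun A _ => (abs_of_nonneg ?_).symm
        exact Set.indicator_nonneg (fun x _ => hpos x) t
  have hMs : ∑ᶠ s, μ s = ∑ A ∈ F, ∑ᶠ s, A.indicator μ s := by
    rw [← finsum_sum_comm F (fun s A => A.indicator μ s) (fun A _ => hfinA A)]
    exact finsum_congr hM
  have hDs : ∑ γ ∈ Γ, ∑ᶠ s, |optApply μ (P.act s γ) - μ s| =
      ∑ A ∈ F, ∑ γ ∈ Γ, ∑ᶠ s, |optApply (A.indicator μ) (P.act s γ) - A.indicator μ s| := by
    rw [Finset.sum_comm]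
    refine Finset.sum_congr rfl fun γ hγ => ?_
    rw [← finsum_sum_comm F (fun s A => |optApply (A.indicator μ) (P.act s γ) - A.indicator μ s|)
      (fun A _ => diff_finite P γ (hfinA A))]
    exact finsum_congr (hD γ hγ)
  rw [hMs, hDs, Finset.mul_sum] at hlt
  obtain ⟨A, hA, hlA⟩ := Finset.exists_lt_of_sum_lt hlt
  obtain ⟨x, hx, rfl⟩ := hF A hA
  exact ⟨_, gComp_isComp hsymm hx, hfinA _,
    fun s => Set.indicator_nonneg (fun x _ => hpos x) s, hlA⟩
end

section
/- Let T ∈ 𝒯. If there exists U ∈ 𝒯 satisfying the defining conditions for ∂T, then there is a maximum such U: a U* ∈ 𝒯 satisfying the defining conditions for ∂T such that every U ∈ 𝒯 satisfying the defining conditions for ∂T is contained in U*. -/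
/-- The (strict) lexicographic order on finite binary sequences, with `false < true`. -/
def lexLt (u v : List Bool) : Prop := List.Lex (· < ·) u v

/-- `t` is an initial segment of the infinite binary sequence `x`. -/
def StreamPrefix (t : List Bool) (x : ℕ → Bool) : Prop :=
  ∀ i : Fin t.length, t.get i = x i

/-- `T` is a finite rooted binary tree, identified with the (finite) set of addresses of
its leaves: every infinite binary sequence has a unique initial segment in `T`. -/
def IsTree (T : Finset (List Bool)) : Prop :=
  ∀ x : ℕ → Bool, ∃! t, t ∈ T ∧ StreamPrefix t x

/-- `U` is contained in `V`: every element of `U` has an extension in `V`. -/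
def ContainedIn (U V : Finset (List Bool)) : Prop :=
  ∀ u ∈ U, ∃ v ∈ V, u <+: v

/-- `T/u = {s : u⌢s ∈ T}`. -/
def treeQuot (T : Finset (List Bool)) (u : List Bool) : Finset (List Bool) :=
  (T.filter (fun t => u <+: t)).image (fun t => t.drop u.length)

/-- `u` is an interior element of `T`: an element of `T` which is neither the
lexicographically least nor the lexicographically greatest element of `T`. -/
def IsInterior (T : Finset (List Bool)) (u : List Bool) : Prop :=
  u ∈ T ∧ (∃ a ∈ T, lexLt a u) ∧ (∃ b ∈ T, lexLt u b)

/-- `U` satisfies the defining conditions for `∂T`: `U` is a tree contained in `T`;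
(1) `U` contains extensions of both `⟨0,1⟩` and `⟨1,0⟩`;
(2) either `2|T/u| ≤ |T/v|` for all interior `u <_lex v` of `U`, or `2|T/v| ≤ |T/u|`
for all interior `u <_lex v` of `U`;
(3) the minimum interior element of `U` ends with `1` and the maximum interior element
of `U` ends with `0`. -/
def DefCondDT (T U : Finset (List Bool)) : Prop :=
  IsTree U ∧ ContainedIn U T ∧
  (∃ u ∈ U, [false, true] <+: u) ∧ (∃ u ∈ U, [true, false] <+: u) ∧
  ((∀ u v, IsInterior U u → IsInterior U v → lexLt u v →
      2 * (treeQuot T u).card ≤ (treeQuot T v).card) ∨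
   (∀ u v, IsInterior U u → IsInterior U v → lexLt u v →
      2 * (treeQuot T v).card ≤ (treeQuot T u).card)) ∧
  (∀ u, IsInterior U u → (∀ v, IsInterior U v → ¬ lexLt v u) → u.getLast? = some true) ∧
  (∀ u, IsInterior U u → (∀ v, IsInterior U v → ¬ lexLt u v) → u.getLast? = some false)

/-- `a` branches off `b` on the `c` side. -/
def LL (c : Bool) : List Bool → List Bool → Prop
  | x :: a, y :: b => (x = c ∧ y = !c) ∨ (x = y ∧ LL c a b)
  | _, _ => False

theorem LL_ext {c : Bool} : ∀ {a b a' b' : List Bool}, LL c a b → a <+: a' → b <+: b' → LL c a' b'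
  | [], _, _, _, h, _, _ => by simp [LL] at h
  | _ :: _, [], _, _, h, _, _ => by simp [LL] at h
  | x :: a, y :: b, [], _, _, h1, _ => by simp at h1
  | x :: a, y :: b, x' :: a', [], _, _, h2 => by simp at h2
  | x :: a, y :: b, x' :: a', y' :: b', h, h1, h2 => by
    rw [List.cons_prefix_cons] at h1 h2
    obtain ⟨rfl, h1⟩ := h1
    obtain ⟨rfl, h2⟩ := h2
    rcases h with h | ⟨h, h'⟩
    · exact Or.inl h
    · exact Or.inr ⟨h, LL_ext h' h1 h2⟩

theorem LL_irrefl {c : Bool} : ∀ {a : List Bool}, ¬ LL c a a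
  | [] => by simp [LL]
  | x :: a => by
    have := @LL_irrefl c a
    simp only [LL]
    rintro (⟨rfl, h⟩ | ⟨_, h⟩)
    · cases x <;> simp at h
    · exact this h

theorem LL_np {c : Bool} {a b : List Bool} (h : LL c a b) : ¬ a <+: b :=
  fun h1 => LL_irrefl (LL_ext h h1 (List.prefix_refl b))

theorem LL_np' {c : Bool} {a b : List Bool} (h : LL c a b) : ¬ b <+: a :=
  fun h1 => LL_irrefl (LL_ext h (List.prefix_refl a) h1)

theorem LL_asymm {c : Bool} : ∀ {a b : List Bool}, LL c a b → ¬ LL c b a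
  | [], _ => by simp [LL]
  | _ :: _, [] => by simp [LL]
  | x :: a, y :: b => by
    have := @LL_asymm c a b
    simp only [LL]
    rintro (⟨rfl, h⟩ | ⟨rfl, h⟩) (⟨rfl, h'⟩ | ⟨h2, h'⟩)
    · cases y <;> simp at h
    · subst h2
      cases y <;> simp at h
    · cases x <;> simp at h'
    · exact this h h'

theorem LL_not {c : Bool} : ∀ {a b : List Bool}, LL c a b ↔ LL (!c) b a
  | [], _ => by simp [LL]
  | _ :: _, [] => by simp [LL]
  | x :: a, y :: b => by
    simp only [LL, @LL_not c a b, Bool.not_not]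
    constructor
    · rintro (⟨h, h'⟩ | ⟨h, h'⟩)
      · exact Or.inl ⟨h', h⟩
      · exact Or.inr ⟨h.symm, h'⟩
    · rintro (⟨h, h'⟩ | ⟨h, h'⟩)
      · exact Or.inl ⟨h', h⟩
      · exact Or.inr ⟨h.symm, h'⟩

theorem LL_tri (c : Bool) : ∀ (a b : List Bool), a <+: b ∨ b <+: a ∨ LL c a b ∨ LL c b a
  | [], _ => by simp
  | _ :: _, [] => by simp
  | x :: a, y :: b => by
    have := LL_tri c a b
    simp only [LL, List.cons_prefix_cons]
    by_cases hxy : x = y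
    · subst hxy
      simp only [true_and]
      tauto
    · cases x <;> cases y <;> cases c <;> simp_all

theorem LL_append (c : Bool) : ∀ (p : List Bool), LL c (p ++ [c]) (p ++ [!c])
  | [] => by simp [LL]
  | x :: p => by simp [LL, LL_append c p]

theorem LL_rep_false {c : Bool} : ∀ {k : ℕ} {a : List Bool}, ¬ LL c a (List.replicate k c)
  | 0, a => by cases a <;> simp [LL]
  | k + 1, [] => by simp [LL]
  | k + 1, x :: a => by
    have := @LL_rep_false c k a
    simp only [List.replicate_succ, LL]
    rintro (⟨_, h⟩ | ⟨_, h⟩)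
    · cases c <;> simp at h
    · exact this h

theorem LL_rep_left {c : Bool} : ∀ {k : ℕ} {a : List Bool},
    LL c a (List.replicate k c ++ [!c]) → List.replicate k c ++ [c] <+: a
  | 0, [] => by simp [LL]
  | 0, x :: a => by
    simp only [List.replicate_zero, List.nil_append, LL]
    rintro (⟨rfl, _⟩ | ⟨_, h⟩)
    · simp [List.cons_prefix_cons]
    · cases a <;> simp [LL] at h
  | k + 1, [] => by simp [LL, List.replicate_succ]
  | k + 1, x :: a => by
    have := @LL_rep_left c k a
    simp only [List.replicate_succ, List.cons_append, LL, List.cons_prefix_cons]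
    rintro (⟨_, h⟩ | ⟨rfl, h⟩)
    · cases c <;> simp at h
    · exact ⟨rfl, this h⟩

theorem lexLt_of_LL : ∀ {a b : List Bool}, LL false a b → lexLt a b
  | [], _, h => by simp [LL] at h
  | _ :: _, [], h => by simp [LL] at h
  | x :: a, y :: b, h => by
    rcases h with ⟨rfl, rfl⟩ | ⟨rfl, h⟩
    · exact List.Lex.rel (by decide)
    · exact List.Lex.cons (lexLt_of_LL h)

theorem LL_of_lexLt {a b : List Bool} (h : lexLt a b) : LL false a b ∨ (a <+: b ∧ a ≠ b) := by
  unfold lexLt at h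
  induction h with
  | nil => right; simp
  | cons h ih =>
    rcases ih with ih | ih
    · exact Or.inl (Or.inr ⟨rfl, ih⟩)
    · right
      simpa [List.cons_prefix_cons] using ih
  | @rel x _ y _ h =>
    left; left
    revert h; cases x <;> cases y <;> decide


theorem streamPrefix_iff {t : List Bool} {x : ℕ → Bool} :
    StreamPrefix t x ↔ ∀ i (h : i < t.length), t[i] = x i := by
  constructor
  · intro h i hi
    exact h ⟨i, hi⟩
  · intro h i
    exact h i i.2

theorem StreamPrefix.comparable {s t : List Bool} {x : ℕ → Bool} (hs : StreamPrefix s x)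
    (ht : StreamPrefix t x) (hl : s.length ≤ t.length) : s <+: t := by
  rw [streamPrefix_iff] at hs ht
  rw [List.prefix_iff_eq_take]
  apply List.ext_getElem
  · simp [hl]
  · intro i h1 h2
    rw [hs i h1, List.getElem_take, ht]

/-- The stream `s` followed by constantly `d`. -/
def strm (s : List Bool) (d : Bool) (i : ℕ) : Bool := if h : i < s.length then s[i] else d

theorem strm_self (s : List Bool) (d : Bool) : StreamPrefix s (strm s d) := by
  rw [streamPrefix_iff]
  intro i hi
  simp [strm, hi]

theorem strm_rep (s : List Bool) (d : Bool) (i : ℕ) :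
    StreamPrefix (s ++ List.replicate i d) (strm s d) := by
  rw [streamPrefix_iff]
  intro j hj
  simp only [strm, List.getElem_append]
  split_ifs <;> simp

theorem cover_rep {U : Finset (List Bool)} (hU : IsTree U) (s : List Bool) (d : Bool) :
    ∃ u ∈ U, u <+: s ∨ ∃ i, u = s ++ List.replicate i d := by
  obtain ⟨u, ⟨hu, hs⟩, _⟩ := hU (strm s d)
  refine ⟨u, hu, ?_⟩
  rcases le_total u.length s.length with h | h
  · exact Or.inl (hs.comparable (strm_self s d) h)
  · right
    refine ⟨u.length - s.length, ?_⟩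
    have := hs.comparable (strm_rep s d (u.length - s.length)) (by simp; omega)
    exact this.eq_of_length (by simp; omega)

theorem cover {U : Finset (List Bool)} (hU : IsTree U) (s : List Bool) :
    ∃ u ∈ U, u <+: s ∨ s <+: u := by
  obtain ⟨u, hu, h | ⟨i, rfl⟩⟩ := cover_rep hU s true
  · exact ⟨u, hu, Or.inl h⟩
  · exact ⟨_, hu, Or.inr (List.prefix_append _ _)⟩

theorem StreamPrefix.mono {s t : List Bool} {x : ℕ → Bool} (ht : StreamPrefix t x)
    (h : s <+: t) : StreamPrefix s x := by
  obtain ⟨r, rfl⟩ := h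
  rw [streamPrefix_iff] at *
  intro i hi
  rw [← ht i (by simp; omega)]
  simp [List.getElem_append, hi]

theorem anti {U : Finset (List Bool)} (hU : IsTree U) {u v : List Bool} (hu : u ∈ U) (hv : v ∈ U)
    (h : u <+: v) : u = v :=
  (hU (strm v true)).unique ⟨hu, (strm_self v true).mono h⟩ ⟨hv, strm_self v true⟩

theorem lexLt_iff {U : Finset (List Bool)} (hU : IsTree U) {u v : List Bool} (hu : u ∈ U)
    (hv : v ∈ U) : lexLt u v ↔ LL false u v := by
  refine ⟨fun h => ?_, lexLt_of_LL⟩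
  rcases LL_of_lexLt h with h | ⟨h, h'⟩
  · exact h
  · exact absurd (anti hU hu hv h) h'

theorem tri {U : Finset (List Bool)} (hU : IsTree U) (c : Bool) {u v : List Bool} (hu : u ∈ U)
    (hv : v ∈ U) : u = v ∨ LL c u v ∨ LL c v u := by
  rcases LL_tri c u v with h | h | h
  · exact Or.inl (anti hU hu hv h)
  · exact Or.inl (anti hU hv hu h).symm
  · exact Or.inr h

theorem int_iff {U : Finset (List Bool)} (hU : IsTree U) (c : Bool) {u : List Bool} :
    IsInterior U u ↔ u ∈ U ∧ (∃ a ∈ U, LL c a u) ∧ (∃ b ∈ U, LL c u b) := by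
  unfold IsInterior
  refine and_congr_right fun hu => ?_
  have e1 : (∃ a ∈ U, lexLt a u) ↔ ∃ a ∈ U, LL false a u :=
    exists_congr fun a => and_congr_right fun ha => lexLt_iff hU ha hu
  have e2 : (∃ a ∈ U, lexLt u a) ↔ ∃ a ∈ U, LL false u a :=
    exists_congr fun a => and_congr_right fun ha => lexLt_iff hU hu ha
  rw [e1, e2]
  cases c
  · rfl
  · simp only [@LL_not true, Bool.not_true]
    rw [and_comm]

theorem transfer {U : Finset (List Bool)} (hU : IsTree U) {c : Bool} {a b : List Bool}
    (ha : a ∈ U) (h : LL c a b) : ∃ b' ∈ U, LL c a b' := by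
  obtain ⟨b', hb', h' | h'⟩ := cover hU b
  · refine ⟨b', hb', ?_⟩
    rcases tri hU c ha hb' with rfl | h1 | h1
    · exact absurd h' (LL_np h)
    · exact h1
    · exact absurd (LL_ext h1 h' (List.prefix_refl a)) (LL_asymm h)
  · exact ⟨b', hb', LL_ext h (List.prefix_refl a) h'⟩

theorem transfer' {U : Finset (List Bool)} (hU : IsTree U) {c : Bool} {a b : List Bool}
    (ha : a ∈ U) (h : LL c b a) : ∃ b' ∈ U, LL c b' a := by
  obtain ⟨b', hb', h'⟩ := transfer hU ha (LL_not.1 h)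
  exact ⟨b', hb', LL_not.2 h'⟩

/-- Condition (3) on side `c`. -/
def C3 (c : Bool) (U : Finset (List Bool)) : Prop :=
  ∃ k, List.replicate k c ++ [c] ∈ U ∧ List.replicate k c ++ [!c] ∈ U

/-- Condition (2) on side `c`. -/
def Inc (T : Finset (List Bool)) (c : Bool) (U : Finset (List Bool)) : Prop :=
  ∀ u v, IsInterior U u → IsInterior U v → LL c u v →
      2 * (treeQuot T u).card ≤ (treeQuot T v).card

theorem C3_of {U : Finset (List Bool)} (hU : IsTree U) {c : Bool} {w : List Bool}
    (hw : IsInterior U w) (hmin : ∀ v, IsInterior U v → ¬ LL c v w)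
    (hl : w.getLast? = some (!c)) : C3 c U := by
  obtain ⟨p, rfl⟩ := List.getLast?_eq_some_iff.1 hl
  have hwU := hw.1
  have key : ∃ i, (p ++ [c]) ++ List.replicate i (!c) ∈ U := by
    obtain ⟨e, he, h | ⟨i, rfl⟩⟩ := cover_rep hU (p ++ [c]) (!c)
    · rcases List.prefix_concat_iff.1 h with rfl | h
      · exact ⟨0, by simpa using he⟩
      · exfalso
        have := anti hU he hwU (h.trans (List.prefix_append _ _))
        rw [this] at h
        have := h.length_le
        simp at this
    · exact ⟨i, he⟩
  obtain ⟨i, he⟩ := key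
  set e := (p ++ [c]) ++ List.replicate i (!c) with hedef
  have hew : LL c e (p ++ [!c]) :=
    LL_ext (LL_append c p) (List.prefix_append _ _) (List.prefix_refl _)
  obtain ⟨r, hr, h⟩ := cover_rep hU [] c
  have hr' : ∃ j, r = List.replicate j c := by
    rcases h with h | ⟨j, h⟩
    · exact ⟨0, by simpa using h⟩
    · exact ⟨j, by simpa using h⟩
  obtain ⟨j, rfl⟩ := hr'
  have heq : e = List.replicate j c := by
    rcases tri hU c he hr with h | h | h
    · exact h
    · exact absurd h LL_rep_false
    · exact absurd hew (hmin e ((int_iff hU c).2 ⟨he, ⟨_, hr, h⟩, ⟨_, hwU, hew⟩⟩))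
  have hall := (List.eq_replicate_iff.1 heq).2
  have hi : i = 0 := by
    by_contra hi
    have := hall (!c) (by simp [hedef, hi])
    cases c <;> simp at this
  have hp : p = List.replicate p.length c := by
    rw [List.eq_replicate_iff]
    exact ⟨rfl, fun b hb => hall b (by simp [hedef, hb])⟩
  refine ⟨p.length, ?_, ?_⟩
  · rw [← hp]
    simpa [hedef, hi] using he
  · rw [← hp]
    exact hwU

theorem C3_left {U : Finset (List Bool)} (hU : IsTree U) {c : Bool} {k : ℕ} {u : List Bool}
    (hk : List.replicate k c ++ [c] ∈ U) (hu : u ∈ U)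
    (h : LL c u (List.replicate k c ++ [!c])) : u = List.replicate k c ++ [c] :=
  (anti hU hk hu (LL_rep_left h)).symm

theorem rep_succ (k : ℕ) (c : Bool) : List.replicate k c ++ [c] = List.replicate (k + 1) c := by
  rw [List.replicate_succ']

theorem of_C3 {U : Finset (List Bool)} (hU : IsTree U) {c : Bool} (h : C3 c U) {u : List Bool}
    (hu : IsInterior U u) (hmin : ∀ v, IsInterior U v → ¬ LL c v u) :
    u.getLast? = some (!c) := by
  obtain ⟨k, h1, h2⟩ := h
  obtain ⟨huU, ⟨a, ha, hau⟩, ⟨b, hb, hub⟩⟩ := (int_iff hU c).1 hu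
  rcases tri hU c huU h2 with rfl | h | h
  · simp
  · have := C3_left hU h1 huU h
    rw [this, rep_succ] at hau
    exact absurd hau LL_rep_false
  · refine absurd h (hmin _ ((int_iff hU c).2 ⟨h2, ⟨_, h1, LL_append c _⟩, ?_⟩))
    exact ⟨u, huU, h⟩

theorem quot_card (T : Finset (List Bool)) (u : List Bool) :
    (treeQuot T u).card = (T.filter (fun t => u <+: t)).card := by
  unfold treeQuot
  apply Finset.card_image_of_injOn
  intro a ha b hb hab
  simp only [Finset.coe_filter, Set.mem_setOf_eq] at ha hb hab
  obtain ⟨r, rfl⟩ := ha.2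
  obtain ⟨s, rfl⟩ := hb.2
  simpa using hab

theorem quot_mono (T : Finset (List Bool)) {u v : List Bool} (h : u <+: v) :
    (treeQuot T v).card ≤ (treeQuot T u).card := by
  rw [quot_card, quot_card]
  apply Finset.card_le_card
  intro t
  simp only [Finset.mem_filter]
  exact fun ht => ⟨ht.1, h.trans ht.2⟩

theorem quot_split {T : Finset (List Bool)} (c : Bool) {p : List Bool} (hp : p ∉ T) :
    (treeQuot T p).card ≤ (treeQuot T (p ++ [c])).card + (treeQuot T (p ++ [!c])).card := by
  rw [quot_card, quot_card, quot_card]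
  refine le_trans (Finset.card_le_card ?_) (Finset.card_union_le _ _)
  intro t
  simp only [Finset.mem_filter, Finset.mem_union]
  rintro ⟨ht, r, rfl⟩
  cases r with
  | nil => simp at ht; exact absurd ht hp
  | cons x r =>
    by_cases hx : x = c
    · subst hx
      exact Or.inl ⟨ht, ⟨r, by simp⟩⟩
    · have hx : x = !c := by cases x <;> cases c <;> simp_all
      subst hx
      exact Or.inr ⟨ht, ⟨r, by simp⟩⟩

theorem geo {T U : Finset (List Bool)} (hT : IsTree T) (hU : IsTree U) (hUT : ContainedIn U T)
    {c : Bool} (hI : Inc T c U) (N : ℕ) (hN : ∀ u ∈ U, u.length ≤ N) :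
    ∀ n (p : List Bool), N ≤ p.length + n → (∃ u ∈ U, p <+: u) →
      (∀ u ∈ U, p <+: u → IsInterior U u) →
      ∃ f ∈ U, p <+: f ∧ ∀ z, IsInterior U z → LL c p z →
        (treeQuot T p).card + (treeQuot T f).card ≤ (treeQuot T z).card := by
  have base : ∀ p, p ∈ U → (∀ u ∈ U, p <+: u → IsInterior U u) →
      ∃ f ∈ U, p <+: f ∧ ∀ z, IsInterior U z → LL c p z →
        (treeQuot T p).card + (treeQuot T f).card ≤ (treeQuot T z).card := by
    intro p hp hinter
    refine ⟨p, hp, List.prefix_refl p, fun z hz hpz => ?_⟩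
    have := hI p z (hinter p hp (List.prefix_refl p)) hz hpz
    omega
  intro n
  induction n with
  | zero =>
    rintro p hn ⟨u, hu, hpu⟩ hinter
    have : p = u := hpu.eq_of_length (le_antisymm hpu.length_le (by have := hN u hu; omega))
    subst this
    exact base p hu hinter
  | succ n ih =>
    rintro p hn ⟨u, hu, hpu⟩ hinter
    by_cases hp : p ∈ U
    · exact base p hp hinter
    have hex : ∀ d, ∃ v ∈ U, p ++ [d] <+: v := by
      intro d
      obtain ⟨v, hv, h | h⟩ := cover hU (p ++ [d])
      · rcases List.prefix_concat_iff.1 h with rfl | h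
        · exact ⟨_, hv, List.prefix_refl _⟩
        · have := anti hU hv hu (h.trans hpu)
          subst this
          have := h.eq_of_length (le_antisymm h.length_le hpu.length_le)
          subst this
          exact absurd hv hp
      · exact ⟨v, hv, h⟩
    have hsub : ∀ d, ∀ u ∈ U, p ++ [d] <+: u → IsInterior U u :=
      fun d u hu h => hinter u hu ((List.prefix_append _ _).trans h)
    obtain ⟨f1, hf1, hpf1, h1⟩ := ih (p ++ [c]) (by simp; omega) (hex c) (hsub c)
    obtain ⟨f2, hf2, hpf2, h2⟩ := ih (p ++ [!c]) (by simp; omega) (hex (!c)) (hsub (!c))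
    refine ⟨f1, hf1, (List.prefix_append _ _).trans hpf1, fun z hz hpz => ?_⟩
    have a1 := h1 f2 (hsub _ f2 hf2 hpf2) (LL_ext (LL_append c p) (List.prefix_refl _) hpf2)
    have a2 := h2 z hz (LL_ext hpz (List.prefix_append _ _) (List.prefix_refl _))
    have hpT : p ∉ T := by
      intro hpT
      obtain ⟨t, ht, hut⟩ := hUT u hu
      have := anti hT hpT ht (hpu.trans hut)
      subst this
      have := hpu.eq_of_length (le_antisymm hpu.length_le hut.length_le)
      subst this
      exact hp hu
    have a3 := quot_split (T := T) c hpT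
    omega

theorem inc_lt {T U : Finset (List Bool)} (hT : IsTree T) (hU : IsTree U)
    (hUT : ContainedIn U T) {c : Bool} (hI : Inc T c U) (h1 : ∃ u ∈ U, [c, !c] <+: u)
    (h2 : ∃ u ∈ U, [!c, c] <+: u) :
    (treeQuot T [c, !c]).card < (treeQuot T [!c, c]).card := by
  obtain ⟨x, hx, hcx⟩ := h1
  obtain ⟨z, hz, hcz⟩ := h2
  have hinter : ∀ u ∈ U, [c, !c] <+: u → IsInterior U u := by
    intro u hu h
    refine (int_iff hU c).2 ⟨hu, ?_, ⟨z, hz, ?_⟩⟩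
    · exact transfer' hU hu (b := [c, c]) (LL_ext (a := [c, c]) (b := [c, !c])
        (by simp [LL]) (List.prefix_refl _) h)
    · exact LL_ext (a := [c, !c]) (b := [!c, c]) (by simp [LL]) h hcz
  have hzint : IsInterior U z := by
    refine (int_iff hU c).2 ⟨hz, ⟨x, hx, ?_⟩, ?_⟩
    · exact LL_ext (a := [c, !c]) (b := [!c, c]) (by simp [LL]) hcx hcz
    · exact transfer hU hz (b := [!c, !c]) (LL_ext (a := [!c, c]) (b := [!c, !c])
        (by simp [LL]) hcz (List.prefix_refl _))
  obtain ⟨f, hf, _, h⟩ := geo hT hU hUT hI (U.sup List.length)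
    (fun u hu => Finset.le_sup (f := List.length) hu) _ [c, !c] (Nat.le_add_left _ _)
    ⟨x, hx, hcx⟩ hinter
  have h' := h z hzint (LL_ext (a := [c, !c]) (b := [!c, c]) (by simp [LL])
    (List.prefix_refl _) hcz)
  have hpos : 0 < (treeQuot T f).card := by
    rw [quot_card, Finset.card_pos]
    obtain ⟨t, ht, hft⟩ := hUT f hf
    exact ⟨t, by simp [ht, hft]⟩
  have := quot_mono T hcz
  omega

theorem defCond_iff {T U : Finset (List Bool)} : DefCondDT T U ↔
    IsTree U ∧ ContainedIn U T ∧ (∀ c, ∃ u ∈ U, [c, !c] <+: u) ∧ (∃ c, Inc T c U) ∧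
      ∀ c, C3 c U := by
  unfold DefCondDT
  refine and_congr_right fun hU => and_congr_right fun hUT => ?_
  have eI : ∀ c, Inc T c U ↔ ∀ u v, IsInterior U u → IsInterior U v → LL c u v →
      2 * (treeQuot T u).card ≤ (treeQuot T v).card := fun c => Iff.rfl
  have e0 : ∀ {u v}, IsInterior U u → IsInterior U v → (lexLt u v ↔ LL false u v) :=
    fun hu hv => lexLt_iff hU hu.1 hv.1
  have e1 : ∀ {u v}, IsInterior U u → IsInterior U v → (lexLt u v ↔ LL true v u) :=
    fun {u v} hu hv => (lexLt_iff hU hu.1 hv.1).trans LL_not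
  have i0 : (∀ u v, IsInterior U u → IsInterior U v → lexLt u v →
      2 * (treeQuot T u).card ≤ (treeQuot T v).card) ↔ Inc T false U :=
    ⟨fun h u v hu hv huv => h u v hu hv ((e0 hu hv).2 huv),
     fun h u v hu hv huv => h u v hu hv ((e0 hu hv).1 huv)⟩
  have i1 : (∀ u v, IsInterior U u → IsInterior U v → lexLt u v →
      2 * (treeQuot T v).card ≤ (treeQuot T u).card) ↔ Inc T true U :=
    ⟨fun h u v hu hv huv => h v u hv hu ((e1 hv hu).2 huv),
     fun h u v hu hv huv => h v u hv hu ((e1 hu hv).1 huv)⟩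
  rw [i0, i1]
  simp only [Bool.forall_bool, Bool.exists_bool, Bool.not_false, Bool.not_true]
  constructor
  · rintro ⟨⟨a, ha, ha'⟩, ⟨b, hb, hb'⟩, hI, hmin, hmax⟩
    refine ⟨⟨⟨a, ha, ha'⟩, ⟨b, hb, hb'⟩⟩, hI, ?_⟩
    classical
    have hne : (U.filter (fun u => IsInterior U u)).Nonempty := by
      refine ⟨a, Finset.mem_filter.2 ⟨ha, (int_iff hU false).2 ⟨ha, ?_, ⟨b, hb, ?_⟩⟩⟩⟩
      · exact transfer' hU ha (b := [false, false]) (LL_ext (a := [false, false])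
          (b := [false, true]) (by simp [LL]) (List.prefix_refl _) ha')
      · exact LL_ext (a := [false, true]) (b := [true, false]) (by simp [LL]) ha' hb'
    constructor
    · obtain ⟨w, hw, hw'⟩ := Finset.exists_min_image _ id hne
      have hwi := (Finset.mem_filter.1 hw).2
      have hm : ∀ v, IsInterior U v → ¬ lexLt v w := by
        intro v hv
        exact not_lt.2 (hw' v (Finset.mem_filter.2 ⟨hv.1, hv⟩))
      exact C3_of hU hwi (fun v hv h => hm v hv ((e0 hv hwi).2 h)) (by simpa using hmin w hwi hm)
    · obtain ⟨w, hw, hw'⟩ := Finset.exists_max_image _ id hne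
      have hwi := (Finset.mem_filter.1 hw).2
      have hm : ∀ v, IsInterior U v → ¬ lexLt w v := by
        intro v hv
        exact not_lt.2 (hw' v (Finset.mem_filter.2 ⟨hv.1, hv⟩))
      exact C3_of hU hwi (fun v hv h => hm v hv ((e1 hwi hv).2 h)) (by simpa using hmax w hwi hm)
  · rintro ⟨⟨ha, hb⟩, hI, h0, h1⟩
    refine ⟨ha, hb, hI, ?_, ?_⟩
    · intro u hu h
      simpa using of_C3 hU h0 hu (fun v hv hvu => h v hv ((e0 hv hu).2 hvu))
    · intro u hu h
      simpa using of_C3 hU h1 hu (fun v hv hvu => h v hv ((e1 hu hv).2 hvu))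

/-- If some `U ∈ 𝒯` satisfies the defining conditions for `∂T`, then there is a maximum
such `U`: one which contains every other tree satisfying the defining conditions. -/
theorem exists_max_defCond (T : Finset (List Bool)) (hT : IsTree T)
    (h : ∃ U, DefCondDT T U) :
    ∃ Umax, DefCondDT T Umax ∧ ∀ U, DefCondDT T U → ContainedIn U Umax := by
  classical
  obtain ⟨U₀, hU₀⟩ := h
  simp only [defCond_iff] at hU₀ ⊢
  obtain ⟨c, hc⟩ := hU₀.2.2.2.1
  -- the family, with a uniform direction
  let F : Finset (List Bool) → Prop := fun U => IsTree U ∧ ContainedIn U T ∧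
    (∀ c, ∃ u ∈ U, [c, !c] <+: u) ∧ (∃ c, Inc T c U) ∧ ∀ c, C3 c U
  have hF0 : F U₀ := hU₀
  have hinc : ∀ U, F U → Inc T c U := by
    rintro U ⟨h1, h2, h3, ⟨d, hd⟩, h4⟩
    by_cases hdc : d = c
    · exact hdc ▸ hd
    · have hdc : d = !c := by cases d <;> cases c <;> simp_all
      subst hdc
      have a := inc_lt hT hU₀.1 hU₀.2.1 hc (hU₀.2.2.1 c) (by simpa using hU₀.2.2.1 (!c))
      have b := inc_lt hT h1 h2 hd (h3 (!c)) (by simpa using h3 c)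
      simp only [Bool.not_not] at b
      omega
  let S : Finset (List Bool) :=
    (T.biUnion (fun t => t.inits.toFinset)).filter (fun s => ∃ U, F U ∧ s ∈ U)
  have hS : ∀ s, s ∈ S ↔ ∃ U, F U ∧ s ∈ U := by
    intro s
    simp only [S, Finset.mem_filter, Finset.mem_biUnion, List.mem_toFinset, List.mem_inits,
      and_iff_right_iff_imp]
    rintro ⟨U, hU, hs⟩
    exact hU.2.1 s hs
  let W : Finset (List Bool) := S.filter (fun s => ∀ s' ∈ S, s <+: s' → s = s')
  have hWS : ∀ w ∈ W, w ∈ S := fun w hw => (Finset.mem_filter.1 hw).1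
  have hWm : ∀ w ∈ W, ∀ s ∈ S, w <+: s → w = s := fun w hw => (Finset.mem_filter.1 hw).2
  have hext : ∀ s ∈ S, ∃ w ∈ W, s <+: w := by
    intro s hs
    obtain ⟨w, hw, hw'⟩ := Finset.exists_max_image (S.filter (fun t => s <+: t)) List.length
      ⟨s, by simp [hs]⟩
    rw [Finset.mem_filter] at hw
    refine ⟨w, Finset.mem_filter.2 ⟨hw.1, fun s' hs' h => ?_⟩, hw.2⟩
    exact h.eq_of_length (le_antisymm h.length_le
      (hw' s' (Finset.mem_filter.2 ⟨hs', hw.2.trans h⟩)))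
  -- every member of the family has a prefix of each element of `W`
  have hpre : ∀ w ∈ W, ∀ U, F U → ∃ u ∈ U, u <+: w := by
    intro w hw U hU
    obtain ⟨u, hu, h | h⟩ := cover hU.1 w
    · exact ⟨u, hu, h⟩
    · have := hWm w hw u ((hS u).2 ⟨U, hU, hu⟩) h
      exact ⟨u, hu, this ▸ List.prefix_refl _⟩
  have hWT : IsTree W := by
    intro x
    obtain ⟨t, ⟨ht, htx⟩, _⟩ := hU₀.1 x
    obtain ⟨w, hw, hw'⟩ := Finset.exists_max_image (S.filter (fun t => StreamPrefix t x))
      List.length ⟨t, Finset.mem_filter.2 ⟨(hS t).2 ⟨U₀, hF0, ht⟩, htx⟩⟩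
    rw [Finset.mem_filter] at hw
    refine ⟨w, ⟨Finset.mem_filter.2 ⟨hw.1, fun s hs hws => ?_⟩, hw.2⟩, ?_⟩
    · obtain ⟨U, hU, hsU⟩ := (hS s).1 hs
      obtain ⟨r, ⟨hr, hrx⟩, _⟩ := hU.1 x
      have hl := hw' r (Finset.mem_filter.2 ⟨(hS r).2 ⟨U, hU, hr⟩, hrx⟩)
      have hrw := hrx.comparable hw.2 hl
      have := anti hU.1 hr hsU (hrw.trans hws)
      subst this
      exact hws.eq_of_length (le_antisymm hws.length_le hl)
    · rintro y ⟨hy, hyx⟩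
      rcases le_total y.length w.length with hl | hl
      · exact hWm y hy w hw.1 (hyx.comparable hw.2 hl)
      · have hwy := hw.2.comparable hyx hl
        have := hw' y (Finset.mem_filter.2 ⟨hWS y hy, hyx⟩)
        exact (hwy.eq_of_length (le_antisymm hl this)).symm
  have hcont : ∀ U, F U → ContainedIn U W :=
    fun U hU u hu => hext u ((hS u).2 ⟨U, hU, hu⟩)
  have hinter : ∀ U, F U → ∀ u ∈ U, IsInterior W u → IsInterior U u := by
    intro U hU u hu hW
    obtain ⟨_, ⟨a, _, ha⟩, ⟨b, _, hb⟩⟩ := (int_iff hWT c).1 hW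
    exact (int_iff hU.1 c).2 ⟨hu, transfer' hU.1 hu ha, transfer hU.1 hu hb⟩
  refine ⟨W, ⟨hWT, ?_, ?_, ⟨c, ?_⟩, ?_⟩, hcont⟩
  · intro w hw
    obtain ⟨U, hU, hwU⟩ := (hS w).1 (hWS w hw)
    exact hU.2.1 w hwU
  · intro d
    obtain ⟨u, hu, hdu⟩ := hU₀.2.2.1 d
    obtain ⟨w, hw, huw⟩ := hcont U₀ hF0 u hu
    exact ⟨w, hw, hdu.trans huw⟩
  · intro u v hu hv huv
    obtain ⟨U, hU, huU⟩ := (hS u).1 (hWS u hu.1)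
    obtain ⟨V, hV, hvV⟩ := (hS v).1 (hWS v hv.1)
    have hui := hinter U hU u huU hu
    have hvi := hinter V hV v hvV hv
    obtain ⟨v', hv', hvu⟩ := hpre u hu.1 V hV
    have hlt : LL c v' v := by
      rcases tri hV.1 c hv' hvV with rfl | h | h
      · exact absurd hvu (LL_np' huv)
      · exact h
      · exact absurd (LL_ext h (List.prefix_refl _) hvu) (LL_asymm huv)
    by_cases hleft : ∃ a ∈ V, LL c a v'
    · have := hinc V hV v' v ((int_iff hV.1 c).2 ⟨hv', hleft, ⟨v, hvV, hlt⟩⟩) hvi hlt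
      have := quot_mono T hvu
      omega
    · obtain ⟨k, hk1, hk2⟩ := hV.2.2.2.2 c
      have hv'eq : v' = List.replicate k c ++ [c] := by
        rcases tri hV.1 c hv' hk1 with h | h | h
        · exact h
        · rw [rep_succ] at h
          exact absurd h LL_rep_false
        · exact absurd ⟨_, hk1, h⟩ hleft
      have hwv : (treeQuot T (List.replicate k c ++ [!c])).card ≤ (treeQuot T v).card ∧
          ∃ b, LL c (List.replicate k c ++ [!c]) b := by
        rcases tri hV.1 c hk2 hvV with h | h | h
        · rw [h]
          obtain ⟨_, _, ⟨b, _, hb⟩⟩ := (int_iff hV.1 c).1 hvi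
          exact ⟨le_rfl, b, hb⟩
        · have := hinc V hV _ v ((int_iff hV.1 c).2
            ⟨hk2, ⟨_, hk1, LL_append c _⟩, ⟨v, hvV, h⟩⟩) hvi h
          exact ⟨by omega, v, h⟩
        · have := C3_left hV.1 hk1 hvV h
          rw [this, ← hv'eq] at hlt
          exact absurd hlt LL_irrefl
      obtain ⟨hwv, b, hb⟩ := hwv
      rw [hv'eq] at hvu
      have huw : LL c u (List.replicate k c ++ [!c]) :=
        LL_ext (LL_append c _) hvu (List.prefix_refl _)
      have hw' : ∃ w' ∈ U, List.replicate k c ++ [!c] <+: w' := by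
        obtain ⟨w', hw', h | h⟩ := cover hU.1 (List.replicate k c ++ [!c])
        · rcases List.prefix_concat_iff.1 h with h | h
          · exact ⟨w', hw', h ▸ List.prefix_refl _⟩
          · have := anti hU.1 hw' huU (h.trans ((List.prefix_append _ _).trans hvu))
            subst this
            exact absurd (h.trans (List.prefix_append _ _)) (LL_np huw)
        · exact ⟨w', hw', h⟩
      obtain ⟨w', hw', hww⟩ := hw'
      have huw' : LL c u w' := LL_ext huw (List.prefix_refl _) hww
      have := hinc U hU u w' hui ((int_iff hU.1 c).2 ⟨hw', ⟨u, huU, huw'⟩,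
        transfer hU.1 hw' (LL_ext hb hww (List.prefix_refl _))⟩) huw'
      have := quot_mono T hww
      omega
  · intro d
    obtain ⟨a, ha, hrep⟩ := cover_rep hWT [] d
    have ha' : ∃ j, a = List.replicate j d := by
      rcases hrep with h | ⟨j, h⟩
      · exact ⟨0, by simpa using h⟩
      · exact ⟨j, by simpa using h⟩
    obtain ⟨j, rfl⟩ := ha'
    obtain ⟨A, hA, haA⟩ := (hS _).1 (hWS _ ha)
    obtain ⟨K, hK1, hK2⟩ := hA.2.2.2.2 d
    have hj : List.replicate j d = List.replicate K d ++ [d] := by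
      rcases tri hA.1 d haA hK1 with h | h | h
      · exact h
      · rw [rep_succ] at h
        exact absurd h LL_rep_false
      · exact absurd h LL_rep_false
    rw [hj] at ha
    refine ⟨K, ha, Finset.mem_filter.2 ⟨(hS _).2 ⟨A, hA, hK2⟩, fun s hs hKs => ?_⟩⟩
    obtain ⟨B, hB, hsB⟩ := (hS s).1 hs
    obtain ⟨k, hk1, hk2⟩ := hB.2.2.2.2 d
    have hkK : k ≤ K := by
      by_contra hlt
      have hp : List.replicate K d ++ [d] <+: List.replicate k d ++ [d] := by
        rw [rep_succ, rep_succ]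
        exact ⟨List.replicate (k - K) d, by rw [← List.replicate_add]; congr 1; omega⟩
      have := congrArg List.length (hWm _ ha _ ((hS _).2 ⟨B, hB, hk1⟩) hp)
      simp at this
      omega
    rcases hkK.eq_or_lt with rfl | hlt
    · exact anti hB.1 hk2 hsB hKs
    · exfalso
      have hp : List.replicate k d ++ [d] <+: List.replicate K d := by
        rw [rep_succ]
        exact ⟨List.replicate (K - (k + 1)) d, by rw [← List.replicate_add]; congr 1; omega⟩
      have := anti hB.1 hk1 hsB (hp.trans ((List.prefix_append _ _).trans hKs))
      subst this
      have h1 := hp.length_le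
      have h2 := hKs.length_le
      simp at h1 h2
      omega
end
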